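/- arXiv:1706.07184 — 2 statements merged into one kernel-verified Lean document; each statement's English description precedes it below -/
import Mathlib

section
/- For all real numbers b₁ < b₂ and every nonzero real λ, | ∫_{b₁}^{b₂} e^{i λ e^{−u}} du | ≤ 2 (e^{b₁} + e^{b₂}) / |λ|. -/
open MeasureTheory Filter

noncomputable section

abbrev SL2 := Matrix.SpecialLinearGroup (Fin 2) ℝ

abbrev PX := Projectivization ℝ (Fin 2 → ℝ)

instance : TopologicalSpace SL2 := instTopologicalSpaceSubtype
instance : TopologicalSpace PX := instTopologicalSpaceQuotient
instance : MeasurableSpace SL2 := borel _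
instance : MeasurableSpace PX := borel _

/-- Euclidean norm on ℝ². -/
def enorm2 (v : Fin 2 → ℝ) : ℝ := Real.sqrt (v 0 ^ 2 + v 1 ^ 2)

/-- Operator norm of g ∈ SL₂(ℝ) w.r.t. the Euclidean norm on ℝ². -/
def opNorm (g : SL2) : ℝ :=
  ‖Matrix.toEuclideanCLM (𝕜 := ℝ) (n := Fin 2) (g : Matrix (Fin 2) (Fin 2) ℝ)‖

/-- Cartan projection κ(g) = log ‖g‖. -/
def kappa (g : SL2) : ℝ := Real.log (opNorm g)

/-- The projective action of SL₂(ℝ) on ℙ(ℝ²). -/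
def act (g : SL2) (x : PX) : PX :=
  Projectivization.map ((Matrix.SpecialLinearGroup.toLin' g).toLinearMap)
    (LinearEquiv.injective _) x

/-- The norm cocycle σ(g, ℝv) = log (‖gv‖/‖v‖). -/
def cocycle (g : SL2) (x : PX) : ℝ :=
  Real.log (enorm2 ((g : Matrix (Fin 2) (Fin 2) ℝ).mulVec x.rep) / enorm2 x.rep)

/-- The sine distance d(ℝv, ℝw) = |det(v,w)|/(‖v‖‖w‖) on ℙ(ℝ²). -/
def projDist (x y : PX) : ℝ :=
  |x.rep 0 * y.rep 1 - x.rep 1 * y.rep 0| / (enorm2 x.rep * enorm2 y.rep)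

/-- An angle θ(x) ∈ ℝ representing x = ℝ(cos θ, sin θ). -/
def pangle (x : PX) : ℝ := Complex.arg (x.rep 0 + x.rep 1 * Complex.I)

/-- The (topological) support of a measure. -/
def measSupp (μ : Measure SL2) : Set SL2 :=
  {g | ∀ U : Set SL2, IsOpen U → g ∈ U → 0 < μ U}

/-- μ has a finite exponential moment. -/
def HasExpMoment (μ : Measure SL2) : Prop :=
  ∃ ε₁ > (0 : ℝ), ∫⁻ g, ENNReal.ofReal (opNorm g ^ ε₁) ∂μ < ⊤

/-- The group generated by the support of μ is Zariski dense in SL₂(ℝ),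
equivalently it is not solvable. -/
def ZariskiDense (μ : Measure SL2) : Prop :=
  ¬ IsSolvable (Subgroup.closure (measSupp μ))

/-- ν is μ-stationary: μ ∗ ν = ν. -/
def IsStationaryMeasure (μ : Measure SL2) (ν : Measure PX) : Prop :=
  μ.bind (fun g => ν.map (act g)) = ν

/-- The product g₁ ⋯ gₙ of a word (g₁, …, gₙ). -/
def word {n : ℕ} (g : Fin n → SL2) : SL2 := (List.ofFn g).prod

/-- The product measure μ^{⊗n} on words of length n. -/
def μpi (μ : Measure SL2) (n : ℕ) : Measure (Fin n → SL2) := Measure.pi fun _ => μ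

section VanDerCorput

variable {a b : ℝ}

theorem norm_integral_smul_deriv_le {𝕜 E : Type*} [NontriviallyNormedField 𝕜] [NormedAlgebra ℝ 𝕜]
    [NormedAddCommGroup E] [NormedSpace 𝕜 E] [NormedSpace ℝ E] [CompleteSpace E]
    [IsScalarTower ℝ 𝕜 E] {u u' : ℝ → 𝕜} {v v' : ℝ → E} {C : ℝ}
    (hu : ∀ x ∈ Set.uIcc a b, HasDerivAt u (u' x) x)
    (hv : ∀ x ∈ Set.uIcc a b, HasDerivAt v (v' x) x)
    (hu' : IntervalIntegrable u' volume a b) (hv' : IntervalIntegrable v' volume a b)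
    (hvC : ∀ x ∈ Set.uIcc a b, ‖v x‖ ≤ C) :
    ‖∫ x in a..b, u x • v' x‖ ≤ (‖u a‖ + ‖u b‖ + |∫ x in a..b, ‖u' x‖|) * C := by
  have smul_le (c : 𝕜) {x : ℝ} (hx : x ∈ Set.uIcc a b) : ‖c • v x‖ ≤ ‖c‖ * C :=
    (norm_smul_le c (v x)).trans (mul_le_mul_of_nonneg_left (hvC x hx) (norm_nonneg c))
  have hC : 0 ≤ C := (norm_nonneg _).trans (hvC a Set.left_mem_uIcc)
  have integral_le : ‖∫ x in a..b, u' x • v x‖ ≤ |∫ x in a..b, ‖u' x‖| * C := by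
    calc ‖∫ x in a..b, u' x • v x‖
        ≤ |∫ x in a..b, ‖u' x‖ * C| :=
          intervalIntegral.norm_integral_le_abs_of_norm_le
            (ae_restrict_of_forall_mem measurableSet_uIoc fun x hx ↦
              smul_le (u' x) (Set.uIoc_subset_uIcc hx)) (hu'.norm.mul_const C)
      _ = |∫ x in a..b, ‖u' x‖| * C := by
          rw [intervalIntegral.integral_mul_const, abs_mul, abs_of_nonneg hC]
  calc ‖∫ x in a..b, u x • v' x‖
      = ‖u b • v b - u a • v a - ∫ x in a..b, u' x • v x‖ := by
        rw [intervalIntegral.integral_smul_deriv_eq_deriv_smul hu hv hu' hv']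
    _ ≤ ‖u b • v b‖ + ‖u a • v a‖ + ‖∫ x in a..b, u' x • v x‖ :=
        (norm_sub_le _ _).trans (add_le_add_left (norm_sub_le _ _) _)
    _ ≤ ‖u b‖ * C + ‖u a‖ * C + |∫ x in a..b, ‖u' x‖| * C :=
        add_le_add_three (smul_le _ Set.right_mem_uIcc) (smul_le _ Set.left_mem_uIcc) integral_le
    _ = (‖u a‖ + ‖u b‖ + |∫ x in a..b, ‖u' x‖|) * C := by ring

/-- **Van der Corput's first derivative estimate**: integrate by parts in
`exp (iφ) = (1 / φ') * (-i * exp (iφ))'`. The last summand is the total variation of `1 / φ'`. -/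
theorem norm_integral_cexp_ofReal_mul_I_le {φ φ' φ'' : ℝ → ℝ}
    (hφ : ∀ x ∈ Set.uIcc a b, HasDerivAt φ (φ' x) x)
    (hφ' : ∀ x ∈ Set.uIcc a b, HasDerivAt φ' (φ'' x) x)
    (hφ'_ne : ∀ x ∈ Set.uIcc a b, φ' x ≠ 0) (hφ'' : IntervalIntegrable φ'' volume a b) :
    ‖∫ x in a..b, Complex.exp (φ x * Complex.I)‖ ≤
      |φ' a|⁻¹ + |φ' b|⁻¹ + |∫ x in a..b, |φ'' x| / φ' x ^ 2| := by
  have hφ'_cont : ContinuousOn φ' (Set.uIcc a b) := HasDerivAt.continuousOn hφ'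
  have deriv_inv (x) (hx : x ∈ Set.uIcc a b) : HasDerivAt φ'⁻¹ (-φ'' x / φ' x ^ 2) x :=
    (hφ' x hx).inv (hφ'_ne x hx)
  have deriv_cexp (x) (hx : x ∈ Set.uIcc a b) :
      HasDerivAt (fun x ↦ Complex.exp (φ x * Complex.I))
        (Complex.exp (φ x * Complex.I) * (φ' x * Complex.I)) x :=
    ((hφ x hx).ofReal_comp.mul_const Complex.I).cexp
  have inv_integrable : IntervalIntegrable (fun x ↦ -φ'' x / φ' x ^ 2) volume a b := by
    simp only [div_eq_mul_inv]
    exact hφ''.neg.mul_continuousOn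
      ((hφ'_cont.pow 2).inv₀ fun x hx ↦ pow_ne_zero 2 (hφ'_ne x hx))
  have cexp_integrable : IntervalIntegrable
      (fun x ↦ Complex.exp (φ x * Complex.I) * (φ' x * Complex.I)) volume a b := by
    have hφ_cont : ContinuousOn φ (Set.uIcc a b) := HasDerivAt.continuousOn hφ
    exact ContinuousOn.intervalIntegrable (by fun_prop)
  have integral_eq : ∫ x in a..b, φ'⁻¹ x • (Complex.exp (φ x * Complex.I) * (φ' x * Complex.I)) =
      (∫ x in a..b, Complex.exp (φ x * Complex.I)) * Complex.I := by
    rw [← intervalIntegral.integral_mul_const]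
    refine intervalIntegral.integral_congr fun x hx ↦ ?_
    have hne : (φ' x : ℂ) ≠ 0 := Complex.ofReal_ne_zero.mpr (hφ'_ne x hx)
    simp only [Pi.inv_apply, Complex.real_smul, Complex.ofReal_inv]
    field_simp
  have key := norm_integral_smul_deriv_le deriv_inv deriv_cexp inv_integrable cexp_integrable
    fun x _ ↦ (Complex.norm_exp_ofReal_mul_I (φ x)).le
  simp only [integral_eq, norm_mul, Complex.norm_I, mul_one] at key
  simpa using key

end VanDerCorput

/-- The reciprocal phase derivative `-exp u / lam` is monotone, so its absolute values at the
endpoints and its total variation add up to twice the larger endpoint value. -/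
theorem oscillatory_integral_bound_general (b₁ b₂ lam : ℝ) (hlam : lam ≠ 0) :
    ‖∫ u in b₁..b₂, Complex.exp (Complex.I * lam * (Real.exp (-u) : ℂ))‖ ≤
      2 * max (Real.exp b₁) (Real.exp b₂) / |lam| := by
  have deriv_exp_neg (c u : ℝ) :
      HasDerivAt (fun u ↦ c * Real.exp (-u)) (-c * Real.exp (-u)) u := by
    simpa using (hasDerivAt_neg u).exp.const_mul c
  have inv_deriv (u : ℝ) : |-lam * Real.exp (-u)|⁻¹ = Real.exp u / |lam| := by
    rw [abs_mul, abs_neg, Real.abs_exp, Real.exp_neg, mul_inv, inv_inv, mul_comm, div_eq_mul_inv]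
  have variation_density (u : ℝ) :
      |- -lam * Real.exp (-u)| / (-lam * Real.exp (-u)) ^ 2 = Real.exp u / |lam| := by
    rw [← inv_deriv, ← sq_abs, neg_mul (-lam), abs_neg, sq, div_mul_cancel_left₀]
    simp [hlam]
  have total_variation : |∫ u in b₁..b₂, Real.exp u / (|lam|)| =
      |Real.exp b₂ - Real.exp b₁| / |lam| := by
    rw [intervalIntegral.integral_div, integral_exp, abs_div, abs_abs]
  calc ‖∫ u in b₁..b₂, Complex.exp (Complex.I * lam * (Real.exp (-u) : ℂ))‖
      = ‖∫ u in b₁..b₂, Complex.exp ((lam * Real.exp (-u) : ℝ) * Complex.I)‖ := by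
        simp only [Complex.ofReal_mul, mul_assoc, mul_comm Complex.I]
    _ ≤ Real.exp b₁ / |lam| + Real.exp b₂ / |lam| + |Real.exp b₂ - Real.exp b₁| / |lam| := by
        simpa only [inv_deriv, variation_density, total_variation] using
          norm_integral_cexp_ofReal_mul_I_le (a := b₁) (b := b₂)
            (fun u _ ↦ deriv_exp_neg lam u) (fun u _ ↦ deriv_exp_neg (-lam) u)
            (fun u _ ↦ by simp [hlam]) (Continuous.intervalIntegrable (by fun_prop) _ _)
    _ = 2 * max (Real.exp b₁) (Real.exp b₂) / |lam| := by
        rw [← add_div, ← add_div, ← two_nsmul_sup_eq_add_add_abs_sub, two_nsmul, two_mul]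

theorem oscillatory_integral_bound (b₁ b₂ lam : ℝ) (h : b₁ < b₂) (hlam : lam ≠ 0) :
    ‖∫ u in b₁..b₂, Complex.exp (Complex.I * lam * (Real.exp (-u) : ℂ))‖ ≤
      2 * (Real.exp b₁ + Real.exp b₂) / |lam| := by
  refine (oscillatory_integral_bound_general b₁ b₂ lam hlam).trans ?_
  gcongr
  exact max_le_add_of_nonneg (Real.exp_nonneg b₁) (Real.exp_nonneg b₂)

end
end

section
/- Let x, x' be points of X = ℙ(ℝ²) and g ∈ SL₂(ℝ), and let x_g^m be a point of X minimizing ℝw ↦ ‖gw‖/‖w‖. Assume that e^{−2κ(g)} + d(x_g^m, g⁻¹x') ≤ (1/2) d(g⁻¹x', x). Then | σ(g,x) − κ(g) − log d(g⁻¹x', x) | ≤ 2 ( e^{−2κ(g)} + d(x_g^m, g⁻¹x') ) / d(g⁻¹x', x). -/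
open MeasureTheory Filter

noncomputable section

/-- ν is μ-stationary: μ ∗ ν = ν. -/
def IsMuStationary (μ : Measure SL2) (ν : Measure PX) : Prop :=
  μ.bind (fun g => ν.map (act g)) = ν

/-!
In the plane, `(u ∧ w) v = (u ∧ v) w + (v ∧ w) u`. Taking norms gives the triangle inequality for
`d`; applying `g` first and choosing `w` to be `u` rotated by a right angle gives
`e^{σ(g, x)} ≤ e^{σ(g, y)} + e^{κ(g)} d(y, x)`. Conversely `g` preserves `∧`, so
`d(y, x) ≤ e^{σ(g, y)} e^{σ(g, x)}`. When `y` is the most contracted point, `σ(g, y) = -κ(g)` and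
the two bounds place `e^{σ(g, x) - κ(g)}` within `e^{-2κ(g)}` of `d(y, x)`.
-/

section Wedge

variable {R : Type*} [CommRing R]

/-- The determinant `u ∧ v` of two plane vectors; `projDist` is its normalized absolute value. -/
def wedge (u v : Fin 2 → R) : R := u 0 * v 1 - u 1 * v 0

/-- The rotation of the plane by a right angle, counterclockwise. -/
def rotate (u : Fin 2 → R) : Fin 2 → R := ![-u 1, u 0]

theorem neg_wedge (u v : Fin 2 → R) : -wedge u v = wedge v u := by
  simp only [wedge]; ring

theorem wedge_rotate_self (u : Fin 2 → R) : wedge u (rotate u) = u 0 ^ 2 + u 1 ^ 2 := by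
  simp [wedge, rotate, sq]

theorem wedge_mulVec (A : Matrix (Fin 2) (Fin 2) R) (u v : Fin 2 → R) :
    wedge (A.mulVec u) (A.mulVec v) = A.det * wedge u v := by
  simp only [wedge, Matrix.mulVec, dotProduct, Fin.sum_univ_two, Matrix.det_fin_two]
  ring

theorem wedge_smul_eq_add (u v w : Fin 2 → R) :
    wedge u w • v = wedge u v • w + wedge v w • u := by
  ext i
  fin_cases i <;> simp [wedge] <;> ring

end Wedge

theorem norm_wedge_mul_seminorm_le {𝕜 : Type*} [SeminormedCommRing 𝕜]
    (p : Seminorm 𝕜 (Fin 2 → 𝕜)) (u v w : Fin 2 → 𝕜) :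
    ‖wedge u w‖ * p v ≤ ‖wedge u v‖ * p w + ‖wedge v w‖ * p u := by
  calc ‖wedge u w‖ * p v = p (wedge u v • w + wedge v w • u) := by
        rw [← wedge_smul_eq_add, map_smul_eq_mul]
    _ ≤ ‖wedge u v‖ * p w + ‖wedge v w‖ * p u := by
        simpa only [map_smul_eq_mul] using map_add_le_add p (wedge u v • w) (wedge v w • u)

theorem enorm2_eq_norm (v : Fin 2 → ℝ) : enorm2 v = ‖WithLp.toLp 2 v‖ := by
  simp [EuclideanSpace.norm_eq, enorm2]

theorem enorm2_nonneg (v : Fin 2 → ℝ) : 0 ≤ enorm2 v := Real.sqrt_nonneg _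

theorem enorm2_pos {v : Fin 2 → ℝ} (hv : v ≠ 0) : 0 < enorm2 v := by
  simpa [enorm2_eq_norm] using hv

theorem enorm2_sq (v : Fin 2 → ℝ) : enorm2 v ^ 2 = v 0 ^ 2 + v 1 ^ 2 :=
  Real.sq_sqrt (by positivity)

theorem enorm2_rotate (v : Fin 2 → ℝ) : enorm2 (rotate v) = enorm2 v := by
  simp [enorm2, rotate, add_comm]

/-- `enorm2` as a seminorm, so that it can be composed with linear maps. -/
def enorm2Seminorm : Seminorm ℝ (Fin 2 → ℝ) :=
  (normSeminorm ℝ (EuclideanSpace ℝ (Fin 2))).comp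
    (WithLp.linearEquiv 2 ℝ (Fin 2 → ℝ)).symm.toLinearMap

theorem enorm2Seminorm_apply (v : Fin 2 → ℝ) : enorm2Seminorm v = enorm2 v :=
  (enorm2_eq_norm v).symm

theorem abs_wedge_le (u v : Fin 2 → ℝ) : |wedge u v| ≤ enorm2 u * enorm2 v := by
  refine abs_le_of_sq_le_sq ?_ (mul_nonneg (enorm2_nonneg u) (enorm2_nonneg v))
  calc wedge u v ^ 2
      ≤ wedge u v ^ 2 + (u 0 * v 0 + u 1 * v 1) ^ 2 := le_add_of_nonneg_right (sq_nonneg _)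
    _ = (enorm2 u * enorm2 v) ^ 2 := by rw [mul_pow, enorm2_sq, enorm2_sq, wedge]; ring

theorem abs_wedge_mul_enorm2_le (u v w : Fin 2 → ℝ) :
    |wedge u w| * enorm2 v ≤ |wedge u v| * enorm2 w + |wedge v w| * enorm2 u := by
  simpa only [enorm2Seminorm_apply, Real.norm_eq_abs] using
    norm_wedge_mul_seminorm_le enorm2Seminorm u v w

section Matrix

variable (A : Matrix (Fin 2) (Fin 2) ℝ) (u v : Fin 2 → ℝ)

theorem enorm2_mulVec_le :
    enorm2 (A.mulVec v) ≤ ‖Matrix.toEuclideanCLM (𝕜 := ℝ) A‖ * enorm2 v := by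
  simpa only [enorm2_eq_norm, Matrix.toEuclideanCLM_toLp] using
    (Matrix.toEuclideanCLM (𝕜 := ℝ) A).le_opNorm (WithLp.toLp 2 v)

theorem abs_det_mul_abs_wedge_le :
    |A.det| * |wedge u v| ≤ enorm2 (A.mulVec u) * enorm2 (A.mulVec v) := by
  simpa only [wedge_mulVec, abs_mul] using abs_wedge_le (A.mulVec u) (A.mulVec v)

theorem enorm2_mul_enorm2_mulVec_le :
    enorm2 u * enorm2 (A.mulVec v) ≤
      enorm2 (A.mulVec u) * enorm2 v + ‖Matrix.toEuclideanCLM (𝕜 := ℝ) A‖ * |wedge u v| := by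
  set N := ‖Matrix.toEuclideanCLM (𝕜 := ℝ) A‖
  obtain hu | hu := (enorm2_nonneg u).eq_or_lt
  · rw [← hu, zero_mul]
    exact add_nonneg (mul_nonneg (enorm2_nonneg _) (enorm2_nonneg _))
      (mul_nonneg (norm_nonneg _) (abs_nonneg _))
  have hwedge : |wedge u (rotate u)| = enorm2 u ^ 2 := by
    rw [wedge_rotate_self, ← enorm2_sq, abs_of_nonneg (sq_nonneg _)]
  have hplane : |wedge u (rotate u)| * enorm2 (A.mulVec v) ≤
      |wedge u v| * enorm2 (A.mulVec (rotate u)) +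
        |wedge v (rotate u)| * enorm2 (A.mulVec u) := by
    simpa only [Seminorm.comp_apply, Matrix.mulVecLin_apply, enorm2Seminorm_apply,
      Real.norm_eq_abs] using
      norm_wedge_mul_seminorm_le (enorm2Seminorm.comp A.mulVecLin) u v (rotate u)
  have hN : enorm2 (A.mulVec (rotate u)) ≤ N * enorm2 u :=
    (enorm2_mulVec_le A (rotate u)).trans_eq (by rw [enorm2_rotate])
  have hv : |wedge v (rotate u)| ≤ enorm2 v * enorm2 u :=
    (abs_wedge_le v (rotate u)).trans_eq (by rw [enorm2_rotate])
  refine le_of_mul_le_mul_left ?_ hu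
  calc enorm2 u * (enorm2 u * enorm2 (A.mulVec v))
      = |wedge u (rotate u)| * enorm2 (A.mulVec v) := by rw [hwedge]; ring
    _ ≤ |wedge u v| * (N * enorm2 u) + enorm2 v * enorm2 u * enorm2 (A.mulVec u) :=
        hplane.trans (add_le_add (mul_le_mul_of_nonneg_left hN (abs_nonneg _))
          (mul_le_mul_of_nonneg_right hv (enorm2_nonneg _)))
    _ = enorm2 u * (enorm2 (A.mulVec u) * enorm2 v + N * |wedge u v|) := by ring

end Matrix

theorem enorm2_rep_pos (x : PX) : 0 < enorm2 x.rep := enorm2_pos x.rep_nonzero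

theorem projDist_eq_wedge (x y : PX) :
    projDist x y = |wedge x.rep y.rep| / (enorm2 x.rep * enorm2 y.rep) := rfl

theorem projDist_nonneg (x y : PX) : 0 ≤ projDist x y :=
  div_nonneg (abs_nonneg _) (mul_nonneg (enorm2_nonneg _) (enorm2_nonneg _))

theorem projDist_comm (x y : PX) : projDist x y = projDist y x := by
  rw [projDist_eq_wedge, projDist_eq_wedge, ← neg_wedge, abs_neg, mul_comm (enorm2 x.rep)]

theorem projDist_triangle (x y z : PX) : projDist x z ≤ projDist x y + projDist y z := by
  have hx := enorm2_rep_pos x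
  have hy := enorm2_rep_pos y
  have hz := enorm2_rep_pos z
  calc projDist x z
      = |wedge x.rep z.rep| * enorm2 y.rep / (enorm2 x.rep * enorm2 y.rep * enorm2 z.rep) := by
        rw [projDist_eq_wedge]; field_simp
    _ ≤ (|wedge x.rep y.rep| * enorm2 z.rep + |wedge y.rep z.rep| * enorm2 x.rep) /
          (enorm2 x.rep * enorm2 y.rep * enorm2 z.rep) := by
        gcongr; exact abs_wedge_mul_enorm2_le _ _ _
    _ = projDist x y + projDist y z := by
        rw [projDist_eq_wedge, projDist_eq_wedge]; field_simp

theorem abs_projDist_sub_projDist_le (x y z : PX) :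
    |projDist x z - projDist y z| ≤ projDist x y := by
  rw [abs_sub_le_iff, sub_le_iff_le_add, sub_le_iff_le_add]
  exact ⟨projDist_triangle x y z, projDist_comm x y ▸ projDist_triangle y x z⟩

theorem exp_kappa (g : SL2) : Real.exp (kappa g) = opNorm g := by
  have hg : (g : Matrix (Fin 2) (Fin 2) ℝ) ≠ 0 := fun h => by simpa [h] using g.det_coe
  exact Real.exp_log (norm_pos_iff.2 (by simpa using hg))

theorem exp_cocycle (g : SL2) (x : PX) :
    Real.exp (cocycle g x) =
      enorm2 ((g : Matrix (Fin 2) (Fin 2) ℝ).mulVec x.rep) / enorm2 x.rep := by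
  have hdet : (g : Matrix (Fin 2) (Fin 2) ℝ).det ≠ 0 := g.det_ne_zero
  have hgx : (g : Matrix (Fin 2) (Fin 2) ℝ).mulVec x.rep ≠ 0 :=
    fun h => x.rep_nonzero (Matrix.eq_zero_of_mulVec_eq_zero hdet h)
  exact Real.exp_log (div_pos (enorm2_pos hgx) (enorm2_rep_pos x))

theorem projDist_le_exp_cocycle_mul_exp_cocycle (g : SL2) (x y : PX) :
    projDist x y ≤ Real.exp (cocycle g x) * Real.exp (cocycle g y) := by
  have hwedge := abs_det_mul_abs_wedge_le (g : Matrix (Fin 2) (Fin 2) ℝ) x.rep y.rep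
  rw [g.det_coe, abs_one, one_mul] at hwedge
  rw [exp_cocycle, exp_cocycle, div_mul_div_comm, projDist_eq_wedge]
  exact div_le_div_of_nonneg_right hwedge (mul_nonneg (enorm2_nonneg _) (enorm2_nonneg _))

theorem exp_cocycle_le_add_exp_kappa_mul_projDist (g : SL2) (x y : PX) :
    Real.exp (cocycle g y) ≤
      Real.exp (cocycle g x) + Real.exp (kappa g) * projDist x y := by
  have hx := enorm2_rep_pos x
  have hy := enorm2_rep_pos y
  rw [exp_cocycle, exp_cocycle, exp_kappa, projDist_eq_wedge]
  set A := (g : Matrix (Fin 2) (Fin 2) ℝ)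
  calc enorm2 (A.mulVec y.rep) / enorm2 y.rep
      = enorm2 x.rep * enorm2 (A.mulVec y.rep) / (enorm2 x.rep * enorm2 y.rep) := by field_simp
    _ ≤ (enorm2 (A.mulVec x.rep) * enorm2 y.rep + opNorm g * |wedge x.rep y.rep|) /
          (enorm2 x.rep * enorm2 y.rep) := by
        gcongr; exact enorm2_mul_enorm2_mulVec_le A x.rep y.rep
    _ = enorm2 (A.mulVec x.rep) / enorm2 x.rep +
          opNorm g * (|wedge x.rep y.rep| / (enorm2 x.rep * enorm2 y.rep)) := by field_simp

theorem abs_exp_cocycle_sub_kappa_sub_projDist_le {g : SL2} {m : PX}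
    (hm : cocycle g m = -kappa g) (x : PX) :
    |Real.exp (cocycle g x - kappa g) - projDist m x| ≤ Real.exp (-(2 * kappa g)) := by
  have hlower : projDist m x ≤ Real.exp (cocycle g x - kappa g) := by
    simpa only [hm, ← Real.exp_add, neg_add_eq_sub] using
      projDist_le_exp_cocycle_mul_exp_cocycle g m x
  rw [abs_of_nonneg (sub_nonneg.2 hlower), sub_le_iff_le_add]
  calc Real.exp (cocycle g x - kappa g)
      = Real.exp (-kappa g) * Real.exp (cocycle g x) := by rw [← Real.exp_add, neg_add_eq_sub]
    _ ≤ Real.exp (-kappa g) * (Real.exp (-kappa g) + Real.exp (kappa g) * projDist m x) := by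
        gcongr; exact hm ▸ exp_cocycle_le_add_exp_kappa_mul_projDist g m x
    _ = Real.exp (-(2 * kappa g)) + projDist m x := by
        rw [mul_add, ← mul_assoc, ← Real.exp_add, ← Real.exp_add, neg_add_cancel, Real.exp_zero,
          one_mul, two_mul, neg_add]

theorem log_sub_log_le_sub_div {a b : ℝ} (ha : 0 < a) (hb : 0 < b) :
    Real.log a - Real.log b ≤ (a - b) / b := by
  rw [← Real.log_div ha.ne' hb.ne', sub_div, div_self hb.ne']
  exact Real.log_le_sub_one_of_pos (div_pos ha hb)

theorem abs_log_sub_log_le_div {a b δ : ℝ} (hδ : 0 < δ) (ha : δ ≤ a) (hb : δ ≤ b) :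
    |Real.log a - Real.log b| ≤ |a - b| / δ := by
  wlog hba : b ≤ a generalizing a b
  · simpa only [abs_sub_comm] using this hb ha (le_of_not_ge hba)
  have hb₀ := hδ.trans_le hb
  rw [abs_of_nonneg (sub_nonneg.2 hba), abs_of_nonneg (sub_nonneg.2 (Real.log_le_log hb₀ hba))]
  exact (log_sub_log_le_sub_div (hδ.trans_le ha) hb₀).trans
    (div_le_div_of_nonneg_left (sub_nonneg.2 hba) hδ hb)

theorem cocycle_cartan_approximation (g : SL2) (x x' xm : PX)
    (hxm : enorm2 ((g : Matrix (Fin 2) (Fin 2) ℝ).mulVec xm.rep) / enorm2 xm.rep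
      = Real.exp (-kappa g))
    (h : Real.exp (-(2 * kappa g)) + projDist xm (act g⁻¹ x') ≤
      (1 / 2) * projDist (act g⁻¹ x') x) :
    |cocycle g x - kappa g - Real.log (projDist (act g⁻¹ x') x)| ≤
      2 * (Real.exp (-(2 * kappa g)) + projDist xm (act g⁻¹ x')) /
        projDist (act g⁻¹ x') x := by
  set y := act g⁻¹ x'
  set D := projDist y x
  set ε := Real.exp (-(2 * kappa g)) + projDist xm y
  set s := Real.exp (cocycle g x - kappa g)
  have hcontract : cocycle g xm = -kappa g :=
    Real.exp_injective ((exp_cocycle g xm).trans hxm)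
  have hclose : |s - D| ≤ ε :=
    (abs_sub_le s (projDist xm x) D).trans (add_le_add
      (abs_exp_cocycle_sub_kappa_sub_projDist_le hcontract x)
      (abs_projDist_sub_projDist_le xm y x))
  have hε : 0 < ε := add_pos_of_pos_of_nonneg (Real.exp_pos _) (projDist_nonneg xm y)
  have hD : 0 < D := by linarith
  have hs : D / 2 ≤ s := by linarith [(abs_le.1 hclose).1]
  calc |cocycle g x - kappa g - Real.log D|
      = |Real.log s - Real.log D| := by rw [Real.log_exp]
    _ ≤ |s - D| / (D / 2) := abs_log_sub_log_le_div (half_pos hD) hs (half_le_self hD.le)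
    _ ≤ ε / (D / 2) := by gcongr
    _ = 2 * ε / D := by rw [div_div_eq_mul_div, mul_comm]

end
end
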